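/- arXiv:0810.1195 — 2 statements merged into one kernel-verified Lean document; each statement's English description precedes it below -/
import Mathlib

section
/- Let E ≠ 0, σ ∈ ℝ, μ² ∈ ℝ, and let φ: ℝ² → ℂ be a Schwartz function. Then the free duality-covariant action is invariant under the symplectic Fourier transform: ∫_{ℝ²} conj(φ̃(t,x))·(σ (D²φ̃)(t,x) + (1−σ)(D̃²φ̃)(t,x) + μ² φ̃(t,x)) dt dx = ∫_{ℝ²} conj(φ(t,x))·(σ (D²φ)(t,x) + (1−σ)(D̃²φ)(t,x) + μ² φ(t,x)) dt dx. -/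
open MeasureTheory Filter Complex

/-- Partial derivative in the first ("time") variable of a curried function. -/
noncomputable def dT (f : ℝ → ℝ → ℂ) (t x : ℝ) : ℂ := deriv (fun s => f s x) t

/-- Partial derivative in the second ("space") variable of a curried function. -/
noncomputable def dX (f : ℝ → ℝ → ℂ) (t x : ℝ) : ℂ := deriv (fun s => f t s) x

/-- The Klein–Gordon operator `D²` in a constant electric background `E`:
`D²f = ½[−(∂_t²f − ∂_x²f) − 2iE(x ∂_t f + t ∂_x f) − E²(t² − x²)f]`. -/
noncomputable def D2 (E : ℝ) (f : ℝ → ℝ → ℂ) (t x : ℝ) : ℂ :=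
  (1 / 2 : ℂ) *
    (-(dT (dT f) t x - dX (dX f) t x)
      - 2 * Complex.I * (E : ℂ) * ((x : ℂ) * dT f t x + (t : ℂ) * dX f t x)
      - (E : ℂ) ^ 2 * ((t : ℂ) ^ 2 - (x : ℂ) ^ 2) * f t x)

/-- The dual operator `D̃²`:
`D̃²f = ½[−(∂_t²f − ∂_x²f) + 2iE(x ∂_t f + t ∂_x f) − E²(t² − x²)f]`. -/
noncomputable def Dt2 (E : ℝ) (f : ℝ → ℝ → ℂ) (t x : ℝ) : ℂ :=
  (1 / 2 : ℂ) *
    (-(dT (dT f) t x - dX (dX f) t x)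
      + 2 * Complex.I * (E : ℂ) * ((x : ℂ) * dT f t x + (t : ℂ) * dX f t x)
      - (E : ℂ) ^ 2 * ((t : ℂ) ^ 2 - (x : ℂ) ^ 2) * f t x)

/-- The symplectic Fourier transform
`φ̃(t,x) := (|E|/2π) ∫_{ℝ²} e^{−iE(x t′ − t x′)} φ(t′,x′) dt′ dx′`. -/
noncomputable def sympFT (E : ℝ) (f : ℝ → ℝ → ℂ) (t x : ℝ) : ℂ :=
  ((|E| / (2 * Real.pi) : ℝ) : ℂ) *
    ∫ q : ℝ × ℝ,
      Complex.exp (-Complex.I * (E : ℂ) * ((x : ℂ) * (q.1 : ℂ) - (t : ℂ) * (q.2 : ℂ))) *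
        f q.1 q.2

/-!
Let `S` be the symplectic Fourier transform, `∂ᵥ` the derivative along `v`, and `mᵥ` the
multiplication by `iE ω(·, v)`, where `ω((t, x), (t', x')) = x t' - t x'`. Since `S ∂ᵥ = mᵥ S` and
`∂ᵥ S = S mᵥ`, conjugation by `S` exchanges the two summands of the covariant derivative
`∂ᵥ + mᵥ`, and it sends the dual covariant derivative `∂ᵥ - mᵥ` to its negative. The operators `D²`
and `D̃²` are quadratic in these derivatives, so both commute with `S`. As `S` is unitary by
Plancherel's theorem, the action is invariant.
-/

open LineDeriv FourierTransform SchwartzMap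

section SymplecticForm

/-- The symplectic form `ω((t, x), (t', x')) = x t' - t x'` on the plane, which is the phase of the
kernel of `sympFT`. -/
def symplecticForm (p q : ℝ × ℝ) : ℝ := p.2 * q.1 - p.1 * q.2

lemma symplecticForm_swap (p q : ℝ × ℝ) : symplecticForm p q = -symplecticForm q p := by
  simp only [symplecticForm]
  ring

lemma symplecticForm_add_smul_self (p v : ℝ × ℝ) (s : ℝ) :
    symplecticForm (p + s • v) v = symplecticForm p v := by
  simp only [symplecticForm, Prod.fst_add, Prod.snd_add, Prod.smul_fst, Prod.smul_snd, smul_eq_mul]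
  ring

lemma hasTemperateGrowth_symplecticForm_left (v : ℝ × ℝ) :
    (fun p ↦ (symplecticForm p v : ℂ)).HasTemperateGrowth := by
  have hfst : (fun p : ℝ × ℝ ↦ p.1).HasTemperateGrowth :=
    (ContinuousLinearMap.fst ℝ ℝ ℝ).hasTemperateGrowth
  have hsnd : (fun p : ℝ × ℝ ↦ p.2).HasTemperateGrowth :=
    (ContinuousLinearMap.snd ℝ ℝ ℝ).hasTemperateGrowth
  unfold symplecticForm
  fun_prop

/-- The map `(t, x) ↦ x - i t`, which turns the symplectic form of the plane into the real inner
product of `ℂ`. -/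
noncomputable def symplecticRotation : (ℝ × ℝ) ≃L[ℝ] ℂ :=
  (ContinuousLinearEquiv.prodComm ℝ ℝ ℝ).trans (equivRealProdCLM.symm.trans conjCLE)

lemma inner_symplecticRotation (z : ℂ) (p : ℝ × ℝ) :
    inner ℝ z (symplecticRotation p) = symplecticForm p (equivRealProdCLM z) := by
  simp [symplecticRotation, symplecticForm, Complex.inner]

lemma measurePreserving_symplecticRotation : MeasurePreserving symplecticRotation :=
  conjLIE.measurePreserving.comp
    (volume_preserving_equiv_real_prod.symm.comp Measure.measurePreserving_swap)

/-- The frequency `(E / 2π)(x - i t)` at which the Fourier transform on `ℂ` has to be evaluated to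
give `sympFT E` at `(t, x)`. -/
noncomputable def symplecticFrequency {E : ℝ} (hE : E ≠ 0) : (ℝ × ℝ) ≃L[ℝ] ℂ :=
  symplecticRotation.trans
    (.smulLeft (Units.mk0 (E / (2 * Real.pi)) (div_ne_zero hE Real.two_pi_pos.ne')))

lemma symplecticFrequency_apply {E : ℝ} (hE : E ≠ 0) (p : ℝ × ℝ) :
    symplecticFrequency hE p = (E / (2 * Real.pi)) • symplecticRotation p := rfl

lemma two_pi_mul_inner_symplecticFrequency {E : ℝ} (hE : E ≠ 0) (z : ℂ) (p : ℝ × ℝ) :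
    (2 * Real.pi * inner ℝ z (symplecticFrequency hE p) : ℂ) =
      E * symplecticForm p (equivRealProdCLM z) := by
  rw [symplecticFrequency_apply, real_inner_smul_right, inner_symplecticRotation]
  norm_cast
  field_simp

lemma integral_comp_symplecticFrequency {G : Type*} [NormedAddCommGroup G] [NormedSpace ℝ G]
    {E : ℝ} (hE : E ≠ 0) (g : ℂ → G) :
    ∫ p, g (symplecticFrequency hE p) = ((|E| / (2 * Real.pi)) ^ 2)⁻¹ • ∫ z, g z := by
  simp_rw [symplecticFrequency_apply, ← map_smul]
  rw [Measure.integral_comp_smul volume (fun p ↦ g (symplecticRotation p)),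
    measurePreserving_symplecticRotation.integral_comp
      symplecticRotation.toHomeomorph.measurableEmbedding, Module.finrank_prod,
    Module.finrank_self, abs_inv, abs_pow, abs_div, abs_of_pos Real.two_pi_pos]

end SymplecticForm

section CovariantDerivative

variable {F : Type*} [NormedAddCommGroup F] [NormedSpace ℂ F]

/-- Multiplication of Schwartz functions by the linear function `ω(·, v)`. -/
noncomputable def mulSymplecticForm (v : ℝ × ℝ) : 𝓢(ℝ × ℝ, F) →L[ℂ] 𝓢(ℝ × ℝ, F) :=
  smulLeftCLM F (fun p ↦ (symplecticForm p v : ℂ))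

lemma mulSymplecticForm_apply (v : ℝ × ℝ) (f : 𝓢(ℝ × ℝ, F)) (p : ℝ × ℝ) :
    mulSymplecticForm v f p = (symplecticForm p v : ℂ) • f p :=
  smulLeftCLM_apply_apply (hasTemperateGrowth_symplecticForm_left v) f p

lemma lineDerivOp_mulSymplecticForm (v : ℝ × ℝ) (f : 𝓢(ℝ × ℝ, F)) :
    ∂_{v} (mulSymplecticForm v f) = mulSymplecticForm v (∂_{v} f) := by
  ext p
  simp only [lineDerivOp_apply, mulSymplecticForm_apply, lineDeriv, symplecticForm_add_smul_self]
  exact deriv_const_smul_field _ _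

/-- The covariant derivative `∂ᵥ + i e ω(·, v)` in the direction `v`, in a constant electric
background `e`. For `v = (1, 0)` and `v = (0, 1)` it is `∂_t + i e x` and `∂_x - i e t`. -/
noncomputable def covDeriv (e : ℝ) (v : ℝ × ℝ) : 𝓢(ℝ × ℝ, F) →L[ℂ] 𝓢(ℝ × ℝ, F) :=
  lineDerivOpCLM ℂ 𝓢(ℝ × ℝ, F) v + (I * e) • mulSymplecticForm v

lemma covDeriv_apply (e : ℝ) (v : ℝ × ℝ) (f : 𝓢(ℝ × ℝ, F)) :
    covDeriv e v f = ∂_{v} f + (I * e) • mulSymplecticForm v f := rfl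

lemma covDeriv_covDeriv (e : ℝ) (v : ℝ × ℝ) (f : 𝓢(ℝ × ℝ, F)) :
    covDeriv e v (covDeriv e v f) = ∂_{v} (∂_{v} f) + (2 * I * e) • mulSymplecticForm v (∂_{v} f)
      - (e ^ 2 : ℂ) • mulSymplecticForm v (mulSymplecticForm v f) := by
  have hsq : (I * e) * (I * e) = -(e ^ 2 : ℂ) := by linear_combination (e ^ 2 : ℂ) * I_sq
  simp only [covDeriv_apply, lineDerivOp_mulSymplecticForm, map_add, map_smul, smul_add, smul_smul,
    hsq]
  module

/-- The Klein–Gordon operator `½(Πₓ² - Πₜ²)` on Schwartz functions, where `Π` is the covariant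
derivative in the background `e`. It is `D²` for `e = E` and `D̃²` for `e = -E`. -/
noncomputable def kleinGordon (e : ℝ) : 𝓢(ℝ × ℝ, F) →L[ℂ] 𝓢(ℝ × ℝ, F) :=
  (1 / 2 : ℂ) • (covDeriv e (0, 1) ∘L covDeriv e (0, 1) - covDeriv e (1, 0) ∘L covDeriv e (1, 0))

lemma kleinGordon_apply (e : ℝ) (f : 𝓢(ℝ × ℝ, F)) :
    kleinGordon e f = (1 / 2 : ℂ) • (covDeriv e (0, 1) (covDeriv e (0, 1) f)
      - covDeriv e (1, 0) (covDeriv e (1, 0) f)) := rfl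

lemma dT_schwartzMap (f : 𝓢(ℝ × ℝ, ℂ)) :
    dT (fun t x ↦ f (t, x)) = fun t x ↦ (∂_{((1 : ℝ), (0 : ℝ))} f) (t, x) := by
  ext t x
  rw [dT, lineDerivOp_apply_eq_fderiv]
  exact ((f.hasFDerivAt (t, x)).comp_hasDerivAt t
    ((hasDerivAt_id t).prodMk (hasDerivAt_const t x))).deriv

lemma dX_schwartzMap (f : 𝓢(ℝ × ℝ, ℂ)) :
    dX (fun t x ↦ f (t, x)) = fun t x ↦ (∂_{((0 : ℝ), (1 : ℝ))} f) (t, x) := by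
  ext t x
  rw [dX, lineDerivOp_apply_eq_fderiv]
  exact ((f.hasFDerivAt (t, x)).comp_hasDerivAt x
    ((hasDerivAt_const x t).prodMk (hasDerivAt_id x))).deriv

lemma D2_schwartzMap (E : ℝ) (f : 𝓢(ℝ × ℝ, ℂ)) (p : ℝ × ℝ) :
    D2 E (fun t x ↦ f (t, x)) p.1 p.2 = kleinGordon E f p := by
  simp only [D2, dT_schwartzMap, dX_schwartzMap, kleinGordon_apply, covDeriv_covDeriv, smul_apply,
    sub_apply, add_apply, mulSymplecticForm_apply, symplecticForm, smul_eq_mul]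
  push_cast
  ring

lemma Dt2_eq_D2_neg (E : ℝ) : Dt2 E = D2 (-E) := by
  ext f t x
  simp only [Dt2, D2, ofReal_neg]
  ring

end CovariantDerivative

section SymplecticFourier

variable {F : Type*} [NormedAddCommGroup F] [NormedSpace ℂ F] {E : ℝ} (hE : E ≠ 0)

/-- The symplectic Fourier transform `sympFT E` as an operator on Schwartz space, obtained from the
Fourier transform on `ℂ` because `ℝ × ℝ` carries no inner product. -/
noncomputable def symplecticFourierCLM : 𝓢(ℝ × ℝ, F) →L[ℂ] 𝓢(ℝ × ℝ, F) :=
  ((|E| / (2 * Real.pi) : ℝ) : ℂ) •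
    (compCLMOfContinuousLinearEquiv ℂ (symplecticFrequency hE) ∘L
      fourierCLM ℂ 𝓢(ℂ, F) ∘L compCLMOfContinuousLinearEquiv ℂ equivRealProdCLM)

lemma symplecticFourierCLM_eq (f : 𝓢(ℝ × ℝ, F)) :
    symplecticFourierCLM hE f = ((|E| / (2 * Real.pi) : ℝ) : ℂ) •
      compCLMOfContinuousLinearEquiv ℂ (symplecticFrequency hE)
        (𝓕 (compCLMOfContinuousLinearEquiv ℂ equivRealProdCLM f)) := rfl

lemma symplecticFourierCLM_apply (f : 𝓢(ℝ × ℝ, F)) (p : ℝ × ℝ) :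
    symplecticFourierCLM hE f p = ((|E| / (2 * Real.pi) : ℝ) : ℂ) •
      𝓕 (compCLMOfContinuousLinearEquiv ℂ equivRealProdCLM f) (symplecticFrequency hE p) := rfl

lemma sympFT_schwartzMap (f : 𝓢(ℝ × ℝ, ℂ)) :
    sympFT E (fun t x ↦ f (t, x)) = fun t x ↦ symplecticFourierCLM hE f (t, x) := by
  ext t x
  rw [symplecticFourierCLM_apply, sympFT, smul_eq_mul, fourier_coe, Real.fourier_eq',
    ← volume_preserving_equiv_real_prod.integral_comp']
  congr 2
  ext z
  congr 2
  have hphase : (2 * Real.pi * inner ℝ z (symplecticFrequency hE (t, x)) : ℂ) =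
      E * (x * z.re - t * z.im) := by
    simpa [symplecticForm] using two_pi_mul_inner_symplecticFrequency hE z (t, x)
  push_cast [measurableEquivRealProd_apply]
  linear_combination I * hphase

lemma lineDerivOp_symplecticFourierCLM (v : ℝ × ℝ) (f : 𝓢(ℝ × ℝ, F)) :
    ∂_{v} (symplecticFourierCLM hE f) =
      (I * E) • symplecticFourierCLM hE (mulSymplecticForm v f) := by
  rw [← map_smul, symplecticFourierCLM_eq, lineDerivOp_smul,
    lineDerivOp_compCLMOfContinuousLinearEquiv, lineDerivOp_fourier_eq, symplecticFourierCLM_eq]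
  congr 3
  ext z
  have hphase := two_pi_mul_inner_symplecticFrequency hE z v
  rw [symplecticForm_swap, ofReal_neg] at hphase
  rw [smul_apply, smulLeftCLM_apply_apply (by fun_prop), ← coe_smul, smul_smul]
  simp only [compCLMOfContinuousLinearEquiv_apply, Function.comp_apply, smul_apply,
    mulSymplecticForm_apply, smul_smul]
  congr 1
  linear_combination (-I) * hphase

lemma symplecticFourierCLM_lineDerivOp (v : ℝ × ℝ) (f : 𝓢(ℝ × ℝ, F)) :
    symplecticFourierCLM hE (∂_{v} f) =
      (I * E) • mulSymplecticForm v (symplecticFourierCLM hE f) := by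
  have hcomp : compCLMOfContinuousLinearEquiv ℂ equivRealProdCLM (∂_{v} f) =
      ∂_{equivRealProdCLM.symm v} (compCLMOfContinuousLinearEquiv ℂ equivRealProdCLM f) := by
    rw [lineDerivOp_compCLMOfContinuousLinearEquiv, ContinuousLinearEquiv.apply_symm_apply]
  ext p
  have hphase := two_pi_mul_inner_symplecticFrequency hE (equivRealProdCLM.symm v) p
  rw [ContinuousLinearEquiv.apply_symm_apply, real_inner_comm] at hphase
  rw [symplecticFourierCLM_apply, hcomp, fourier_lineDerivOp_eq, smul_apply,
    smulLeftCLM_apply_apply (by fun_prop), smul_apply, mulSymplecticForm_apply,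
    symplecticFourierCLM_apply, ← coe_smul]
  simp only [smul_smul]
  congr 1
  linear_combination (I * ((|E| / (2 * Real.pi) : ℝ) : ℂ)) * hphase

lemma symplecticFourierCLM_covDeriv (v : ℝ × ℝ) (f : 𝓢(ℝ × ℝ, F)) :
    symplecticFourierCLM hE (covDeriv E v f) = covDeriv E v (symplecticFourierCLM hE f) := by
  rw [covDeriv_apply, covDeriv_apply, map_add, map_smul, symplecticFourierCLM_lineDerivOp,
    lineDerivOp_symplecticFourierCLM, add_comm]

lemma symplecticFourierCLM_covDeriv_neg (v : ℝ × ℝ) (f : 𝓢(ℝ × ℝ, F)) :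
    symplecticFourierCLM hE (covDeriv (-E) v f) =
      -covDeriv (-E) v (symplecticFourierCLM hE f) := by
  rw [covDeriv_apply, covDeriv_apply, map_add, map_smul, symplecticFourierCLM_lineDerivOp,
    lineDerivOp_symplecticFourierCLM, ofReal_neg]
  module

lemma symplecticFourierCLM_kleinGordon (f : 𝓢(ℝ × ℝ, F)) :
    symplecticFourierCLM hE (kleinGordon E f) = kleinGordon E (symplecticFourierCLM hE f) := by
  simp only [kleinGordon_apply, map_smul, map_sub, symplecticFourierCLM_covDeriv]

lemma symplecticFourierCLM_kleinGordon_neg (f : 𝓢(ℝ × ℝ, F)) :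
    symplecticFourierCLM hE (kleinGordon (-E) f) =
      kleinGordon (-E) (symplecticFourierCLM hE f) := by
  simp only [kleinGordon_apply, map_smul, map_sub, symplecticFourierCLM_covDeriv_neg, map_neg,
    neg_neg]

theorem integral_inner_symplecticFourierCLM {H : Type*} [NormedAddCommGroup H]
    [InnerProductSpace ℂ H] [CompleteSpace H] (f g : 𝓢(ℝ × ℝ, H)) :
    ∫ p, inner ℂ (symplecticFourierCLM hE f p) (symplecticFourierCLM hE g p) =
      ∫ p, inner ℂ (f p) (g p) := by
  set c : ℝ := |E| / (2 * Real.pi) with hc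
  have hc0 : c ≠ 0 := div_ne_zero (abs_ne_zero.mpr hE) Real.two_pi_pos.ne'
  set u := compCLMOfContinuousLinearEquiv ℂ equivRealProdCLM f with hu
  set w := compCLMOfContinuousLinearEquiv ℂ equivRealProdCLM g with hw
  calc ∫ p, inner ℂ (symplecticFourierCLM hE f p) (symplecticFourierCLM hE g p)
      = ∫ p, c ^ 2 •
          inner ℂ (𝓕 u (symplecticFrequency hE p)) (𝓕 w (symplecticFrequency hE p)) := by
        simp only [symplecticFourierCLM_apply, coe_smul, ← hc, ← hu, ← hw, inner_smul_left_eq_smul,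
          inner_smul_right_eq_smul, smul_smul, sq]
    _ = ∫ z, inner ℂ (𝓕 u z) (𝓕 w z) := by
        rw [integral_smul, integral_comp_symplecticFrequency hE (fun z ↦ inner ℂ (𝓕 u z) (𝓕 w z)),
          smul_inv_smul₀ (pow_ne_zero 2 hc0)]
    _ = ∫ z, inner ℂ (u z) (w z) := integral_inner_fourier_fourier u w
    _ = ∫ p, inner ℂ (f p) (g p) :=
        volume_preserving_equiv_real_prod.integral_comp' fun p ↦ inner ℂ (f p) (g p)

end SymplecticFourier

theorem free_action_duality_invariant_general (E : ℝ) (hE : E ≠ 0) (a b c : ℂ)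
    (φ ψ : SchwartzMap (ℝ × ℝ) ℂ) :
    (∫ p : ℝ × ℝ,
        (starRingEnd ℂ) (sympFT E (fun t x => φ (t, x)) p.1 p.2) *
          (a * D2 E (sympFT E (fun t x => ψ (t, x))) p.1 p.2
            + b * Dt2 E (sympFT E (fun t x => ψ (t, x))) p.1 p.2
            + c * sympFT E (fun t x => ψ (t, x)) p.1 p.2))
      = ∫ p : ℝ × ℝ,
          (starRingEnd ℂ) (φ p) *
            (a * D2 E (fun t x => ψ (t, x)) p.1 p.2
              + b * Dt2 E (fun t x => ψ (t, x)) p.1 p.2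
              + c * ψ p) := by
  have plancherel := integral_inner_symplecticFourierCLM hE φ
    (a • kleinGordon E ψ + b • kleinGordon (-E) ψ + c • ψ)
  simp only [map_add, map_smul, symplecticFourierCLM_kleinGordon,
    symplecticFourierCLM_kleinGordon_neg] at plancherel
  simpa only [sympFT_schwartzMap hE, Dt2_eq_D2_neg, D2_schwartzMap, RCLike.inner_apply', add_apply,
    smul_apply, smul_eq_mul] using plancherel

/-- the free duality-covariant action is invariant under the
symplectic Fourier transform. -/
theorem free_action_duality_invariant (E : ℝ) (hE : E ≠ 0) (σ μ2 : ℝ)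
    (φ : SchwartzMap (ℝ × ℝ) ℂ) :
    (∫ p : ℝ × ℝ,
        (starRingEnd ℂ) (sympFT E (fun t x => φ (t, x)) p.1 p.2) *
          ((σ : ℂ) * D2 E (sympFT E (fun t x => φ (t, x))) p.1 p.2
            + ((1 - σ : ℝ) : ℂ) * Dt2 E (sympFT E (fun t x => φ (t, x))) p.1 p.2
            + (μ2 : ℂ) * sympFT E (fun t x => φ (t, x)) p.1 p.2))
      = ∫ p : ℝ × ℝ,
          (starRingEnd ℂ) (φ p) *
            ((σ : ℂ) * D2 E (fun t x => φ (t, x)) p.1 p.2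
              + ((1 - σ : ℝ) : ℂ) * Dt2 E (fun t x => φ (t, x)) p.1 p.2
              + (μ2 : ℂ) * φ p) :=
  free_action_duality_invariant_general E hE σ (1 - σ : ℝ) μ2 φ φ
end

section
/- Let E > 0, E′ := E/2, and let m ≥ n ≥ 0 be integers. For every (t,x) ∈ ℝ² and both signs, the regularized Wigner-transform integral converges and equals the explicit Laguerre-type expression: lim_{ε→0⁺} (1/2π) ∫_ℝ e^{−εk²} e^{ikx} f_m^±(t − k/E) f_n^±(t + k/E) dk = F^±_{m,n}(t,x). (The left-hand side is the Wigner distribution of |f_m^±⟩⟨f_n^∓| at noncommutativity parameter θ = 2/E, using conj(f_n^∓) = f_n^±.) -/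
open MeasureTheory Filter Complex

/-- Physicists' Hermite polynomials. -/
noncomputable def hermitePoly : ℕ → ℂ → ℂ
  | 0, _ => 1
  | 1, y => 2 * y
  | (n + 2), y => 2 * y * hermitePoly (n + 1) y - 2 * (n + 1) * hermitePoly n y

/-- The generalized (resonance) eigenfunctions `f_n^±` (sign `s = ±1`). -/
noncomputable def fres (E' s : ℝ) (n : ℕ) (q : ℝ) : ℂ :=
  (((E' / Real.pi) ^ ((1 : ℝ) / 4) : ℝ) : ℂ) *
    (((Real.sqrt (2 ^ n * n.factorial) : ℝ) : ℂ))⁻¹ *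
    Complex.exp ((s : ℂ) * Complex.I * (Real.pi : ℂ) / 8) *
    Complex.exp (-(s : ℂ) * Complex.I * ((E' / 2 : ℝ) : ℂ) * (q : ℂ) ^ 2) *
    hermitePoly n (Complex.exp ((s : ℂ) * Complex.I * (Real.pi : ℂ) / 4) *
      ((Real.sqrt E' : ℝ) : ℂ) * (q : ℂ))

/-- The explicit Laguerre-type expression `F^±_{m,n}` for `m ≥ n` (sign `s = ±1`):
`F^±_{m,n}(t,x) = (E/2π) √(m!n!) e^{∓iE(t²−x²)/2} (e^{±iπ/4}√E)^{m−n} (t∓x)^{m−n}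
Σ_{p=0}^{n} (±iE(t²−x²))^{n−p} (−1)^p / ((m−p)!(n−p)!p!)`. -/
noncomputable def Fge (E s : ℝ) (m n : ℕ) (t x : ℝ) : ℂ :=
  ((E / (2 * Real.pi) : ℝ) : ℂ) * ((Real.sqrt (m.factorial * n.factorial) : ℝ) : ℂ) *
    Complex.exp (-(s : ℂ) * Complex.I * (E : ℂ) * ((t : ℂ) ^ 2 - (x : ℂ) ^ 2) / 2) *
    (Complex.exp ((s : ℂ) * Complex.I * (Real.pi : ℂ) / 4) * ((Real.sqrt E : ℝ) : ℂ)) ^ (m - n) *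
    ((t : ℂ) - (s : ℂ) * (x : ℂ)) ^ (m - n) *
    ∑ p ∈ Finset.range (n + 1),
      ((s : ℂ) * Complex.I * (E : ℂ) * ((t : ℂ) ^ 2 - (x : ℂ) ^ 2)) ^ (n - p) * (-1 : ℂ) ^ p /
        (((m - p).factorial : ℂ) * ((n - p).factorial : ℂ) * (p.factorial : ℂ))

/-- `F^±_{m,n}` for all `m, n`, with `F^±_{m,n} := conj(F^∓_{n,m})` when `m < n`. -/
noncomputable def Fmn (E s : ℝ) (m n : ℕ) (t x : ℝ) : ℂ :=
  if n ≤ m then Fge E s m n t x else (starRingEnd ℂ) (Fge E (-s) n m t x)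

/-!
With `β = e^{±iπ/4} / √E` and probabilists' Hermite polynomials `Heₙ`, the regularized integrand is
a constant times `Heₘ(a - βk) Heₙ(a + βk) exp(-bk² + ixk)`, where `a = e^{±iπ/4} √E t` and
`b = ε + β²/2`. For `Re b > 0` such an integral is, up to the Gaussian factor
`(π/b)^{1/2} exp((ix)²/4b)`, the expectation of a polynomial under a formal Gaussian distribution of
mean `ix/2b` and variance `1/2b`. That is a continuous function of `b` on the closed half plane
without the origin, so only the value at the imaginary point `b = β²/2` matters. There the variance
is `β⁻²`, so the contractions of Wick's theorem inside each Hermite factor cancel, while each of the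
`p! C(m,p) C(n,p)` ways to contract `p` factors across contributes `(-1)ᵖ`. The sum is the
Itô–Hermite polynomial, which is the Laguerre-type expression `F^±_{m,n}`.
-/

open Polynomial

section HermitePolynomials

theorem derivative_hermite (n : ℕ) : derivative (hermite n) = n * hermite (n - 1) := by
  induction n with
  | zero => simp
  | succ n ih =>
    rw [hermite_succ, derivative_sub, derivative_mul, derivative_X, ih]
    cases n with
    | zero => simp
    | succ n =>
      rw [Nat.add_sub_cancel, derivative_mul, derivative_natCast, Nat.add_sub_cancel,
        hermite_succ n]
      push_cast
      ring

theorem hermite_add_two (n : ℕ) :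
    hermite (n + 2) = X * hermite (n + 1) - (n + 1 : ℤ[X]) * hermite n := by
  rw [hermite_succ (n + 1), derivative_hermite]
  simp

theorem hermitePoly_eq_aeval_hermite {d : ℂ} (hd : d ^ 2 = 2) (y : ℂ) :
    ∀ n, hermitePoly n y = d ^ n * aeval (d * y) (hermite n)
  | 0 => by simp [hermitePoly]
  | 1 => by simp [hermitePoly, ← hd]; ring
  | n + 2 => by
    rw [hermitePoly, hermitePoly_eq_aeval_hermite hd y (n + 1),
      hermitePoly_eq_aeval_hermite hd y n, hermite_add_two, ← hd]
    simp only [map_sub, map_mul, map_add, aeval_X, map_natCast, map_one]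
    ring

variable {R : Type*} [CommRing R]

/-- The Hermite polynomial `Heₙ(a + bX)` in an affine variable, with coefficients in `R`; as a
polynomial it can be fed to linear functionals on `R[X]`. -/
noncomputable def affineHermite (a b : R) (n : ℕ) : R[X] :=
  ((hermite n).map (Int.castRingHom R)).comp (C a + C b * X)

@[simp]
theorem affineHermite_zero (a b : R) : affineHermite a b 0 = 1 := by
  simp [affineHermite]

theorem eval_affineHermite (a b x : R) (n : ℕ) :
    (affineHermite a b n).eval x = aeval (a + b * x) (hermite n) := by
  simp [affineHermite, aeval_def, eval_map]

theorem derivative_affineHermite (a b : R) (n : ℕ) :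
    derivative (affineHermite a b n) = C (n * b) * affineHermite a b (n - 1) := by
  simp only [affineHermite, derivative_comp, derivative_map, derivative_hermite]
  simp only [derivative_add, derivative_C, derivative_C_mul, derivative_X, Polynomial.map_mul,
    Polynomial.map_natCast, mul_comp, natCast_comp, map_mul, map_natCast]
  ring

theorem affineHermite_succ (a b : R) (n : ℕ) :
    affineHermite a b (n + 1) =
      (C a + C b * X) * affineHermite a b n - C (n : R) * affineHermite a b (n - 1) := by
  simp only [affineHermite, hermite_succ, derivative_hermite]
  simp

theorem iterate_derivative_affineHermite (a b : R) (n p : ℕ) :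
    derivative^[p] (affineHermite a b n) =
      C (n.descFactorial p * b ^ p) * affineHermite a b (n - p) := by
  induction p with
  | zero => simp
  | succ p ih =>
    rw [Function.iterate_succ_apply', ih, derivative_C_mul, derivative_affineHermite, ← mul_assoc,
      ← C_mul, Nat.sub_sub, Nat.descFactorial_succ]
    congr 2
    push_cast
    ring

end HermitePolynomials

section ItoHermite

variable {R S : Type*} [CommRing R] [CommRing S]

/-- The Itô–Hermite polynomials `H_{m,n}(z, w) = ∑ₚ (-1)ᵖ p! C(m,p) C(n,p) zᵐ⁻ᵖ wⁿ⁻ᵖ`, which for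
`w = z̄` are the complex Hermite polynomials. They absorb the two cases `n ≤ m` and `m < n` of
`Fmn` into one expression. -/
def itoHermite (m n : ℕ) (z w : R) : R :=
  ∑ p ∈ Finset.range (min m n + 1),
    (-1) ^ p * (p.factorial * m.choose p * n.choose p : ℕ) * z ^ (m - p) * w ^ (n - p)

theorem itoHermite_comm (m n : ℕ) (z w : R) : itoHermite m n z w = itoHermite n m w z := by
  unfold itoHermite
  rw [min_comm]
  refine Finset.sum_congr rfl fun p _ => ?_
  push_cast
  ring

theorem map_itoHermite (f : R →+* S) (m n : ℕ) (z w : R) :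
    f (itoHermite m n z w) = itoHermite m n (f z) (f w) := by
  simp [itoHermite]

theorem itoHermite_eq_sum_range (m n : ℕ) (z w : R) :
    itoHermite m n z w = ∑ p ∈ Finset.range (m + 1),
      (-1) ^ p * (p.factorial * m.choose p * n.choose p : ℕ) * z ^ (m - p) * w ^ (n - p) := by
  refine Finset.sum_subset (Finset.range_mono (by lia)) fun p hp hp' => ?_
  rw [Finset.mem_range] at hp hp'
  simp [Nat.choose_eq_zero_of_lt (show n < p by lia)]

theorem itoHermite_eq_of_le {K : Type*} [Field K] [CharZero K] {m n : ℕ} (hmn : n ≤ m) (z w : K) :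
    itoHermite m n z w = m.factorial * n.factorial * z ^ (m - n) *
      ∑ p ∈ Finset.range (n + 1), (z * w) ^ (n - p) * (-1) ^ p /
        ((m - p).factorial * (n - p).factorial * p.factorial) := by
  rw [itoHermite, min_eq_right hmn, Finset.mul_sum]
  refine Finset.sum_congr rfl fun p hp => ?_
  have hpn : p ≤ n := Finset.mem_range_succ_iff.mp hp
  have hz : z ^ (m - p) = z ^ (m - n) * z ^ (n - p) := by rw [← pow_add]; congr 1; lia
  push_cast
  rw [hz, Nat.cast_choose K (hpn.trans hmn), Nat.cast_choose K hpn, mul_pow]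
  field_simp

end ItoHermite

section GaussianMean

variable {R : Type*} [CommRing R] (μ v : R)

/-- The moments of the formal Gaussian distribution of mean `μ` and variance `v`. Both parameters
may lie in any commutative ring; oscillatory Gaussians have imaginary variance. -/
def gaussianMoment : ℕ → R
  | 0 => 1
  | n + 1 => μ * gaussianMoment n + v * n * gaussianMoment (n - 1)

/-- The expectation of a polynomial under the formal Gaussian distribution of mean `μ` and
variance `v`. -/
noncomputable def gaussianMean : R[X] →ₗ[R] R :=
  (basisMonomials R).constr R (gaussianMoment μ v)

@[simp]
theorem gaussianMean_monomial (n : ℕ) (a : R) :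
    gaussianMean μ v (monomial n a) = a * gaussianMoment μ v n := by
  have h := (basisMonomials R).constr_basis R (gaussianMoment μ v) n
  rw [coe_basisMonomials] at h
  rw [gaussianMean, ← mul_one a, ← smul_eq_mul, ← smul_monomial, map_smul, h, smul_eq_mul,
    smul_eq_mul, mul_one]

@[simp]
theorem gaussianMean_one : gaussianMean μ v 1 = 1 := by
  simpa [gaussianMoment] using gaussianMean_monomial μ v 0 1

theorem gaussianMean_X_mul (P : R[X]) :
    gaussianMean μ v (X * P) = μ * gaussianMean μ v P + v * gaussianMean μ v (derivative P) := by
  induction P using Polynomial.induction_on' with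
  | add P Q hP hQ => simp only [mul_add, map_add, hP, hQ]; ring
  | monomial n a =>
    rw [X_mul_monomial, derivative_monomial]
    simp only [gaussianMean_monomial]
    rw [gaussianMoment]
    ring

variable {μ v}

theorem eq_smul_gaussianMean {Λ : R[X] →ₗ[R] R}
    (hΛ : ∀ P, Λ (X * P) = μ * Λ P + v * Λ (derivative P)) : Λ = Λ 1 • gaussianMean μ v := by
  have hmoment : ∀ n, Λ (X ^ n) = Λ 1 * gaussianMoment μ v n := fun n => by
    induction n using Nat.twoStepInduction with
    | zero => simp [gaussianMoment]
    | one => simpa [gaussianMoment, mul_comm] using hΛ 1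
    | more n ih₀ ih₁ =>
      rw [gaussianMoment, pow_succ', hΛ, derivative_X_pow, ← smul_eq_C_mul, map_smul,
        Nat.add_sub_cancel, ih₀, ih₁, smul_eq_mul]
      ring
  refine (basisMonomials R).ext fun n => ?_
  simp only [coe_basisMonomials, LinearMap.smul_apply, gaussianMean_monomial, one_mul, smul_eq_mul]
  rw [← X_pow_eq_monomial, hmoment]

/-- The variance is tuned so that contractions inside `Heₘ` cancel against the lower-order term of
the three-term recurrence; only contractions with `Q` survive. -/
theorem gaussianMean_affineHermite_succ_mul {b : R} (hb : b ^ 2 * v = 1) (a : R) (m : ℕ)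
    (Q : R[X]) :
    gaussianMean μ v (affineHermite a b (m + 1) * Q) =
      gaussianMean μ v (affineHermite a b m * ((a + b * μ) • Q + (b * v) • derivative Q)) := by
  have hsplit : affineHermite a b (m + 1) * Q =
      a • (affineHermite a b m * Q) + b • (X * (affineHermite a b m * Q)) -
        (m : R) • (affineHermite a b (m - 1) * Q) := by
    rw [affineHermite_succ]
    simp only [smul_eq_C_mul]
    ring
  have hderiv : derivative (affineHermite a b m * Q) =
      (m * b) • (affineHermite a b (m - 1) * Q) + affineHermite a b m * derivative Q := by
    rw [derivative_mul, derivative_affineHermite, smul_eq_C_mul]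
    ring
  rw [hsplit, map_sub, map_add, map_smul, map_smul, map_smul, gaussianMean_X_mul, hderiv]
  simp only [mul_add, mul_smul_comm, map_add, map_smul, smul_eq_mul]
  linear_combination m * gaussianMean μ v (affineHermite a b (m - 1) * Q) * hb

theorem gaussianMean_affineHermite_mul {b : R} (hb : b ^ 2 * v = 1) (a : R) (m : ℕ) (Q : R[X]) :
    gaussianMean μ v (affineHermite a b m * Q) =
      ∑ p ∈ Finset.range (m + 1),
        m.choose p * (a + b * μ) ^ (m - p) * (b * v) ^ p * gaussianMean μ v (derivative^[p] Q) := by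
  let D : Module.End R R[X] := (b * v) • derivative
  let A : Module.End R R[X] := (a + b * μ) • 1
  have hpow : gaussianMean μ v (affineHermite a b m * Q) = gaussianMean μ v (((D + A) ^ m) Q) := by
    induction m generalizing Q with
    | zero => simp
    | succ m ih =>
      rw [gaussianMean_affineHermite_succ_mul hb, ih, pow_succ, Module.End.mul_apply, add_comm D A]
      rfl
  have hcomm : Commute D A := (Commute.one_right D).smul_right _
  rw [hpow, hcomm.add_pow', Finset.Nat.sum_antidiagonal_eq_sum_range_succ_mk, LinearMap.sum_apply,
    map_sum]
  refine Finset.sum_congr rfl fun p _ => ?_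
  simp only [A, D, _root_.smul_pow, one_pow, mul_smul_comm, mul_one, LinearMap.smul_apply,
    Module.End.pow_apply, map_nsmul, map_smul, smul_eq_mul]
  rw [nsmul_eq_mul]
  ring

theorem gaussianMean_affineHermite {b : R} (hb : b ^ 2 * v = 1) (a : R) (n : ℕ) :
    gaussianMean μ v (affineHermite a b n) = (a + b * μ) ^ n := by
  have h := gaussianMean_affineHermite_mul (μ := μ) hb a n 1
  rw [Finset.sum_range_succ'] at h
  simpa [Function.iterate_succ_apply] using h

theorem gaussianMean_affineHermite_mul_affineHermite {b : R} (hb : b ^ 2 * v = 1) (a a' : R)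
    (m n : ℕ) :
    gaussianMean μ v (affineHermite a (-b) m * affineHermite a' b n) =
      itoHermite m n (a - b * μ) (a' + b * μ) := by
  rw [gaussianMean_affineHermite_mul (by rwa [neg_sq]), itoHermite_eq_sum_range]
  refine Finset.sum_congr rfl fun p _ => ?_
  have hsign : (-b * v) ^ p * b ^ p = (-1) ^ p := by
    rw [← mul_pow]
    congr 1
    linear_combination -hb
  rw [iterate_derivative_affineHermite, ← smul_eq_C_mul, map_smul, gaussianMean_affineHermite hb,
    Nat.descFactorial_eq_factorial_mul_choose, ← hsign, smul_eq_mul, neg_mul b μ, ← sub_eq_add_neg]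
  push_cast
  ring

variable [TopologicalSpace R] [IsTopologicalRing R]

theorem continuous_gaussianMoment (n : ℕ) :
    Continuous fun q : R × R => gaussianMoment q.1 q.2 n := by
  induction n using Nat.twoStepInduction with
  | zero => simpa only [gaussianMoment] using continuous_const
  | one => simpa [gaussianMoment] using continuous_fst
  | more n ih₀ ih₁ =>
    refine ((continuous_fst.mul ih₁).add
      ((continuous_snd.mul (continuous_const (y := ((n + 1 : ℕ) : R)))).mul ih₀)).congr fun q => ?_
    rw [gaussianMoment]
    rfl

theorem continuous_gaussianMean (P : R[X]) :
    Continuous fun q : R × R => gaussianMean q.1 q.2 P := by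
  induction P using Polynomial.induction_on' with
  | add P Q hP hQ => simp only [map_add]; exact hP.add hQ
  | monomial n a =>
    simp only [gaussianMean_monomial]
    exact continuous_const.mul (continuous_gaussianMoment n)

end GaussianMean

section GaussianIntegral

theorem sq_ofReal_sqrt {r : ℝ} (hr : 0 ≤ r) : (Real.sqrt r : ℂ) ^ 2 = r := by
  rw [← ofReal_pow, Real.sq_sqrt hr]

theorem integrable_eval_mul_cexp_quadratic {b : ℂ} (hb : 0 < b.re) (c : ℂ) (P : ℂ[X]) :
    Integrable fun k : ℝ => P.eval (k : ℂ) * cexp (-b * k ^ 2 + c * k) := by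
  induction P using Polynomial.induction_on' with
  | add P Q hP hQ => simp only [eval_add, add_mul]; exact hP.add hQ
  | monomial n a =>
    -- `|k|ⁿ ≤ n! (eᵏ + e⁻ᵏ)`, and `e^{±k}` only shifts the linear term of the exponent.
    have hplus := (integrable_cexp_quadratic hb (c + (1 : ℝ)) 0).norm
    have hminus := (integrable_cexp_quadratic hb (c + (-1 : ℝ)) 0).norm
    refine ((hplus.add hminus).const_mul (‖a‖ * n.factorial)).mono'
      (Continuous.aestronglyMeasurable (by simp only [eval_monomial]; fun_prop))
      (Eventually.of_forall fun k => ?_)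
    have hpow : |k| ^ n ≤ n.factorial * (Real.exp k + Real.exp (-k)) := by
      have h := Real.pow_div_factorial_le_exp |k| (abs_nonneg k) n
      rw [div_le_iff₀' (by positivity)] at h
      exact h.trans (by gcongr; exact Real.exp_abs_le k)
    have hshift (r : ℝ) : ‖cexp (-b * k ^ 2 + (c + r) * k + 0)‖ =
        Real.exp (r * k) * ‖cexp (-b * k ^ 2 + c * k)‖ := by
      rw [← norm_exp_ofReal, ← norm_mul, ← Complex.exp_add]
      congr 2
      push_cast
      ring
    calc ‖(monomial n a).eval (k : ℂ) * cexp (-b * k ^ 2 + c * k)‖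
        = ‖a‖ * |k| ^ n * ‖cexp (-b * k ^ 2 + c * k)‖ := by simp
      _ ≤ ‖a‖ * (n.factorial * (Real.exp k + Real.exp (-k))) * ‖cexp (-b * k ^ 2 + c * k)‖ := by
        gcongr
      _ = ‖a‖ * n.factorial * (‖cexp (-b * k ^ 2 + (c + (1 : ℝ)) * k + 0)‖ +
            ‖cexp (-b * k ^ 2 + (c + (-1 : ℝ)) * k + 0)‖) := by
        rw [hshift, hshift, one_mul, neg_one_mul]
        ring

theorem integral_derivative_add_mul_cexp_quadratic {b : ℂ} (hb : 0 < b.re) (c : ℂ) (P : ℂ[X]) :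
    ∫ k : ℝ, (derivative P + (C c - C (2 * b) * X) * P).eval (k : ℂ) *
      cexp (-b * k ^ 2 + c * k) = 0 := by
  refine integral_eq_zero_of_hasDerivAt_of_integrable (fun k => ?_)
    (integrable_eval_mul_cexp_quadratic hb c _) (integrable_eval_mul_cexp_quadratic hb c P)
  have hexponent : HasDerivAt (fun z : ℂ => -b * z ^ 2 + c * z) (-b * (2 * k) + c) k := by
    exact (((hasDerivAt_pow 2 (k : ℂ)).const_mul (-b)).add
      ((hasDerivAt_id (k : ℂ)).const_mul c)).congr_deriv (by simp)
  refine ((P.hasDerivAt (k : ℂ)).mul hexponent.cexp).comp_ofReal.congr_deriv ?_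
  simp only [eval_add, eval_sub, eval_mul, eval_C, eval_X]
  ring

theorem integral_eval_mul_cexp_quadratic {b : ℂ} (hb : 0 < b.re) (c : ℂ) (P : ℂ[X]) :
    ∫ k : ℝ, P.eval (k : ℂ) * cexp (-b * k ^ 2 + c * k) =
      (Real.pi / b) ^ (1 / 2 : ℂ) * cexp (c ^ 2 / (4 * b)) *
        gaussianMean (c / (2 * b)) (1 / (2 * b)) P := by
  have hint := integrable_eval_mul_cexp_quadratic hb c
  let Λ : ℂ[X] →ₗ[ℂ] ℂ :=
    { toFun P := ∫ k : ℝ, P.eval (k : ℂ) * cexp (-b * k ^ 2 + c * k)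
      map_add' P Q := by simp only [eval_add, add_mul, integral_add (hint P) (hint Q)]
      map_smul' a P := by
        simp only [eval_smul, smul_eq_mul, mul_assoc, integral_const_mul, RingHom.id_apply] }
  have hΛ_one : Λ 1 = (Real.pi / b) ^ (1 / 2 : ℂ) * cexp (c ^ 2 / (4 * b)) := by
    have h := integral_cexp_quadratic (b := -b) (by simpa using hb) c 0
    simpa [Λ, div_neg] using h
  have hb0 : b ≠ 0 := by
    rintro rfl
    simp at hb
  have hΛ (Q : ℂ[X]) : Λ (X * Q) = c / (2 * b) * Λ Q + 1 / (2 * b) * Λ (derivative Q) := by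
    have h : Λ (derivative Q + (c • Q - (2 * b) • (X * Q))) = 0 := by
      rw [← integral_derivative_add_mul_cexp_quadratic hb c Q]
      simp only [Λ, LinearMap.coe_mk, AddHom.coe_mk, smul_eq_C_mul, sub_mul, mul_assoc]
    simp only [map_add, map_sub, map_smul, smul_eq_mul] at h
    field_simp
    linear_combination -h
  rw [← hΛ_one]
  exact LinearMap.congr_fun (eq_smul_gaussianMean hΛ) P

theorem tendsto_integral_eval_mul_cexp_quadratic {b₀ : ℂ} (hre : 0 ≤ b₀.re) (hb₀ : b₀ ≠ 0) (c : ℂ)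
    (P : ℂ[X]) :
    Tendsto (fun b : ℂ => ∫ k : ℝ, P.eval (k : ℂ) * cexp (-b * k ^ 2 + c * k))
      (nhdsWithin b₀ {b | 0 < b.re})
      (nhds ((Real.pi / b₀) ^ (1 / 2 : ℂ) * cexp (c ^ 2 / (4 * b₀)) *
        gaussianMean (c / (2 * b₀)) (1 / (2 * b₀)) P)) := by
  have hslit : (Real.pi : ℂ) / b₀ ∈ slitPlane := by
    have hnorm := normSq_pos.mpr hb₀
    rw [mem_slitPlane_iff, div_eq_mul_inv, re_ofReal_mul, im_ofReal_mul, inv_re, inv_im]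
    rcases hre.eq_or_lt with hre0 | hre0
    · have him : b₀.im ≠ 0 := fun him => hb₀ (Complex.ext hre0.symm him)
      right
      simp [him, hb₀, Real.pi_ne_zero]
    · left
      positivity
  have hcont : ContinuousAt (fun b : ℂ => (Real.pi / b) ^ (1 / 2 : ℂ) * cexp (c ^ 2 / (4 * b)) *
      gaussianMean (c / (2 * b)) (1 / (2 * b)) P) b₀ := by
    have hmean : ContinuousAt (fun b : ℂ => gaussianMean (c / (2 * b)) (1 / (2 * b)) P) b₀ :=
      (continuous_gaussianMean P).continuousAt.comp
        (f := fun b : ℂ => (c / (2 * b), 1 / (2 * b))) (by fun_prop (disch := simpa))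
    fun_prop (disch := simp [*])
  refine (hcont.tendsto.mono_left nhdsWithin_le_nhds).congr' ?_
  filter_upwards [self_mem_nhdsWithin] with b hb
  exact (integral_eval_mul_cexp_quadratic hb c P).symm

theorem tendsto_integral_hermite_mul_hermite {β : ℂ} (hβ : 0 < β.re) (hβ2 : 0 ≤ (β ^ 2).re)
    (a a' c : ℂ) (m n : ℕ) :
    Tendsto
      (fun b : ℂ => ∫ k : ℝ, aeval (a - β * k) (hermite m) * aeval (a' + β * k) (hermite n) *
        cexp (-b * k ^ 2 + c * k))
      (nhdsWithin (β ^ 2 / 2) {b | 0 < b.re})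
      (nhds (Real.sqrt (2 * Real.pi) / β * cexp ((c / β) ^ 2 / 2) *
        itoHermite m n (a - c / β) (a' + c / β))) := by
  have hβ0 : β ≠ 0 := by
    rintro rfl
    simp at hβ
  have hsqrt : (Real.pi / (β ^ 2 / 2) : ℂ) ^ (1 / 2 : ℂ) = Real.sqrt (2 * Real.pi) / β := by
    have hsq : (Real.pi / (β ^ 2 / 2) : ℂ) = (Real.sqrt (2 * Real.pi) / β) ^ 2 := by
      rw [div_pow, sq_ofReal_sqrt (by positivity)]
      push_cast
      field_simp
    have hre : 0 < (Real.sqrt (2 * Real.pi) / β : ℂ).re := by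
      rw [div_eq_mul_inv, re_ofReal_mul, inv_re]
      have := normSq_pos.mpr hβ0
      positivity
    rw [hsq, one_div, sq_cpow_two_inv hre]
  have h := tendsto_integral_eval_mul_cexp_quadratic (b₀ := β ^ 2 / 2)
    (by simpa using div_nonneg hβ2 zero_le_two) (by simpa using hβ0) c
    (affineHermite a (-β) m * affineHermite a' β n)
  rw [hsqrt, gaussianMean_affineHermite_mul_affineHermite (by field_simp)] at h
  convert h using 2
  · simp only [eval_mul, eval_affineHermite, neg_mul, sub_eq_add_neg]
  · have hmean : β * (c / (2 * (β ^ 2 / 2))) = c / β := by field_simp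
    rw [hmean]
    congr 3
    field_simp
    ring

theorem tendsto_ofReal_add_nhdsWithin_re_pos {b₀ : ℂ} (hb₀ : 0 ≤ b₀.re) :
    Tendsto (fun ε : ℝ => (ε : ℂ) + b₀) (nhdsWithin 0 (Set.Ioi 0))
      (nhdsWithin b₀ {b | 0 < b.re}) := by
  have hcont : Continuous fun ε : ℝ => (ε : ℂ) + b₀ := by fun_prop
  refine tendsto_nhdsWithin_iff.mpr ⟨?_, ?_⟩
  · simpa using (hcont.tendsto 0).mono_left nhdsWithin_le_nhds
  · filter_upwards [self_mem_nhdsWithin] with ε hε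
    simpa using add_pos_of_pos_of_nonneg hε hb₀

end GaussianIntegral

section ResonanceEigenfunctions

/-- The phase `e^{±iπ/4}` in the resonance eigenfunctions. -/
noncomputable def resonancePhase (s : ℝ) : ℂ :=
  cexp (s * I * Real.pi / 4)

theorem conj_resonancePhase (s : ℝ) :
    starRingEnd ℂ (resonancePhase (-s)) = resonancePhase s := by
  simp [resonancePhase, ← exp_conj, map_ofNat (starRingEnd ℂ)]

variable {s : ℝ}

theorem resonancePhase_sq (hs : s = 1 ∨ s = -1) : resonancePhase s ^ 2 = s * I := by
  have hdouble : resonancePhase s ^ 2 = cexp (s * (Real.pi / 2 * I)) := by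
    rw [resonancePhase, ← Complex.exp_nat_mul]
    congr 1
    push_cast
    ring
  rw [hdouble]
  rcases hs with rfl | rfl
  · simp [exp_pi_div_two_mul_I]
  · simp [Complex.exp_neg, exp_pi_div_two_mul_I]

theorem resonancePhase_re_pos (hs : s = 1 ∨ s = -1) : 0 < (resonancePhase s).re := by
  have h : resonancePhase s = cexp ((s * Real.pi / 4 : ℝ) * I) := by
    rw [resonancePhase]
    congr 1
    push_cast
    ring
  rw [h, exp_ofReal_mul_I_re]
  have hpi := Real.pi_pos
  refine Real.cos_pos_of_mem_Ioo ⟨?_, ?_⟩ <;> rcases hs with rfl | rfl <;> linarith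

/-- The complex slope `β = e^{±iπ/4} / √E` with which the integration variable `k` enters the
arguments of the two Hermite polynomials. -/
noncomputable def resonanceSlope (E s : ℝ) : ℂ :=
  resonancePhase s / Real.sqrt E

theorem resonanceSlope_re_pos {E : ℝ} (hE : 0 < E) (hs : s = 1 ∨ s = -1) :
    0 < (resonanceSlope E s).re := by
  rw [resonanceSlope, div_ofReal_re]
  exact div_pos (resonancePhase_re_pos hs) (Real.sqrt_pos.mpr hE)

theorem resonanceSlope_sq {E : ℝ} (hE : 0 ≤ E) (hs : s = 1 ∨ s = -1) :
    resonanceSlope E s ^ 2 = s * I / E := by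
  rw [resonanceSlope, div_pow, resonancePhase_sq hs, sq_ofReal_sqrt hE]

theorem resonanceSlope_mul {E : ℝ} (hE : 0 < E) (k : ℂ) :
    resonanceSlope E s * k = resonancePhase s * Real.sqrt E * (k / E) := by
  rw [resonanceSlope, ← sq_ofReal_sqrt hE.le]
  field_simp

theorem I_mul_div_resonanceSlope {E : ℝ} (hE : 0 < E) (hs : s = 1 ∨ s = -1) (x : ℂ) :
    I * x / resonanceSlope E s = resonancePhase s * Real.sqrt E * (s * x) := by
  have hphase0 : resonancePhase s ≠ 0 := exp_ne_zero _
  have hsqrtE0 : (Real.sqrt E : ℂ) ≠ 0 := by exact_mod_cast (Real.sqrt_pos.mpr hE).ne'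
  have hs2 : (s : ℂ) ^ 2 = 1 := by rcases hs with rfl | rfl <;> simp
  rw [resonanceSlope]
  field_simp
  linear_combination -(s * x : ℂ) * resonancePhase_sq hs - I * x * hs2

theorem sqrt_mul_resonancePhase_mul_sqrt_div_resonanceSlope {E : ℝ} (hE : 0 < E) (s : ℝ) :
    Real.sqrt (E / 2 / Real.pi) * (resonancePhase s * (Real.sqrt (2 * Real.pi) /
      resonanceSlope E s)) = E := by
  have hphase0 : resonancePhase s ≠ 0 := exp_ne_zero _
  have hsqrt : Real.sqrt (E / 2 / Real.pi) * Real.sqrt (2 * Real.pi) = Real.sqrt E := by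
    rw [← Real.sqrt_mul (by positivity)]
    congr 1
    field_simp
  calc Real.sqrt (E / 2 / Real.pi) * (resonancePhase s * (Real.sqrt (2 * Real.pi) /
        resonanceSlope E s))
      = (Real.sqrt (E / 2 / Real.pi) * Real.sqrt (2 * Real.pi) : ℝ) * Real.sqrt E := by
        rw [resonanceSlope]
        push_cast
        field_simp
    _ = E := by rw [hsqrt, ← sq, sq_ofReal_sqrt hE.le]

theorem fres_eq_hermite (E' s : ℝ) (n : ℕ) (q : ℝ) :
    fres E' s n q = ((E' / Real.pi) ^ (1 / 4 : ℝ) : ℝ) * (Real.sqrt n.factorial : ℂ)⁻¹ *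
      cexp (s * I * Real.pi / 8) * cexp (-s * I * (E' / 2) * q ^ 2) *
      aeval (resonancePhase s * Real.sqrt (2 * E') * q) (hermite n) := by
  have hsq : (Real.sqrt 2 : ℂ) ^ 2 = 2 := by
    rw [sq_ofReal_sqrt zero_le_two, ofReal_ofNat]
  have hsqrt2 : (Real.sqrt 2 : ℂ) ≠ 0 := by
    intro h
    simp [h] at hsq
  have hpow : Real.sqrt (2 ^ n) = Real.sqrt 2 ^ n := by
    rw [Real.sqrt_eq_iff_mul_self_eq (by positivity) (by positivity), ← mul_pow,
      Real.mul_self_sqrt zero_le_two]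
  have harg : (Real.sqrt 2 : ℂ) * (resonancePhase s * Real.sqrt E' * q) =
      resonancePhase s * Real.sqrt (2 * E') * q := by
    rw [Real.sqrt_mul zero_le_two]
    push_cast
    ring
  rw [fres, ← resonancePhase, hermitePoly_eq_aeval_hermite hsq, harg,
    Real.sqrt_mul (by positivity), hpow]
  push_cast
  field_simp

theorem Fge_eq_itoHermite {E : ℝ} (hE : 0 ≤ E) (hs : s = 1 ∨ s = -1) {m n : ℕ} (hmn : n ≤ m)
    (t x : ℝ) :
    Fge E s m n t x = (E / (2 * Real.pi) : ℝ) * (Real.sqrt (m.factorial * n.factorial) : ℂ)⁻¹ *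
      cexp (-s * I * E * (t ^ 2 - x ^ 2) / 2) *
      itoHermite m n (resonancePhase s * Real.sqrt E * (t - s * x))
        (resonancePhase s * Real.sqrt E * (t + s * x)) := by
  have hsqrtE : (Real.sqrt E : ℂ) ^ 2 = E := sq_ofReal_sqrt hE
  have hs2 : (s : ℂ) ^ 2 = 1 := by rcases hs with rfl | rfl <;> simp
  have hprod : resonancePhase s * Real.sqrt E * (t - s * x) *
      (resonancePhase s * Real.sqrt E * (t + s * x)) = s * I * E * ((t : ℂ) ^ 2 - x ^ 2) := by
    rw [← resonancePhase_sq hs, ← hsqrtE]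
    linear_combination -(resonancePhase s ^ 2 * (Real.sqrt E : ℂ) ^ 2 * x ^ 2) * hs2
  have hfact0 : (Real.sqrt (m.factorial * n.factorial) : ℂ) ≠ 0 := by
    exact_mod_cast (Real.sqrt_pos.mpr (by positivity)).ne'
  have hfact : (Real.sqrt (m.factorial * n.factorial) : ℂ) ^ 2 = m.factorial * n.factorial := by
    rw [sq_ofReal_sqrt (by positivity)]
    push_cast
    rfl
  rw [Fge, itoHermite_eq_of_le hmn, hprod, ← hfact, mul_pow _ ((t : ℂ) - s * x), ← resonancePhase]
  field_simp

theorem Fmn_eq_itoHermite {E : ℝ} (hE : 0 ≤ E) (hs : s = 1 ∨ s = -1) (m n : ℕ) (t x : ℝ) :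
    Fmn E s m n t x = (E / (2 * Real.pi) : ℝ) * (Real.sqrt (m.factorial * n.factorial) : ℂ)⁻¹ *
      cexp (-s * I * E * (t ^ 2 - x ^ 2) / 2) *
      itoHermite m n (resonancePhase s * Real.sqrt E * (t - s * x))
        (resonancePhase s * Real.sqrt E * (t + s * x)) := by
  rw [Fmn]
  split_ifs with hmn
  · exact Fge_eq_itoHermite hE hs hmn t x
  · have hs' : -s = 1 ∨ -s = -1 := by rcases hs with rfl | rfl <;> simp
    rw [Fge_eq_itoHermite hE hs' (le_of_not_ge hmn), itoHermite_comm m n,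
      mul_comm (n.factorial : ℝ)]
    simp only [map_mul, map_inv₀, conj_ofReal, map_itoHermite, conj_resonancePhase, ← exp_conj]
    simp [sub_eq_add_neg, map_ofNat (starRingEnd ℂ)]

theorem fres_mul_fres {E' : ℝ} (hE' : 0 ≤ E') (s : ℝ) (m n : ℕ) (q r : ℝ) :
    fres E' s m q * fres E' s n r =
      Real.sqrt (E' / Real.pi) * (Real.sqrt (m.factorial * n.factorial) : ℂ)⁻¹ *
        resonancePhase s * cexp (-s * I * (E' / 2) * (q ^ 2 + r ^ 2)) *
        (aeval (resonancePhase s * Real.sqrt (2 * E') * q) (hermite m) *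
          aeval (resonancePhase s * Real.sqrt (2 * E') * r) (hermite n)) := by
  have hconst : (Real.sqrt (E' / Real.pi) : ℂ) = ((E' / Real.pi) ^ (1 / 4 : ℝ) : ℝ) ^ 2 := by
    rw [← ofReal_pow, ← Real.rpow_natCast, ← Real.rpow_mul (by positivity), Real.sqrt_eq_rpow]
    norm_num
  have hphase : resonancePhase s = cexp (s * I * Real.pi / 8) ^ 2 := by
    rw [resonancePhase, ← Complex.exp_nat_mul]
    congr 1
    push_cast
    ring
  rw [fres_eq_hermite, fres_eq_hermite, hconst, Real.sqrt_mul m.factorial.cast_nonneg, ofReal_mul,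
    mul_inv, mul_add (-s * I * (E' / 2) : ℂ), Complex.exp_add]
  generalize aeval (resonancePhase s * Real.sqrt (2 * E') * q) (hermite m) = Hm
  generalize aeval (resonancePhase s * Real.sqrt (2 * E') * r) (hermite n) = Hn
  rw [hphase]
  ring

theorem exp_mul_fres_mul_fres {E : ℝ} (hE : 0 < E) (hs : s = 1 ∨ s = -1) (m n : ℕ)
    (ε t x k : ℝ) :
    (Real.exp (-(ε * k ^ 2)) : ℂ) * cexp (I * k * x) *
        fres (E / 2) s m (t - k / E) * fres (E / 2) s n (t + k / E) =
      Real.sqrt (E / 2 / Real.pi) * (Real.sqrt (m.factorial * n.factorial) : ℂ)⁻¹ *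
        resonancePhase s * cexp (-s * I * E * t ^ 2 / 2) *
        (aeval (resonancePhase s * Real.sqrt E * t - resonanceSlope E s * k) (hermite m) *
          aeval (resonancePhase s * Real.sqrt E * t + resonanceSlope E s * k) (hermite n) *
          cexp (-(ε + resonanceSlope E s ^ 2 / 2) * k ^ 2 + I * x * k)) := by
  have hE0 : (E : ℂ) ≠ 0 := by exact_mod_cast hE.ne'
  have hexp : (Real.exp (-(ε * k ^ 2)) : ℂ) * cexp (I * k * x) *
      cexp (-s * I * ((E / 2 : ℝ) / 2) * ((t - k / E : ℝ) ^ 2 + (t + k / E : ℝ) ^ 2)) =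
      cexp (-s * I * E * t ^ 2 / 2) *
        cexp (-(ε + resonanceSlope E s ^ 2 / 2) * k ^ 2 + I * x * k) := by
    rw [resonanceSlope_sq hE.le hs, ofReal_exp]
    simp only [← Complex.exp_add]
    congr 1
    push_cast
    field_simp
    ring
  rw [mul_assoc, fres_mul_fres (by positivity), mul_div_cancel₀ E two_ne_zero,
    resonanceSlope_mul hE, ← mul_sub, ← mul_add]
  push_cast at hexp ⊢
  generalize aeval (resonancePhase s * Real.sqrt E * (t - k / E)) (hermite m) = Hm
  generalize aeval (resonancePhase s * Real.sqrt E * (t + k / E)) (hermite n) = Hn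
  linear_combination (Real.sqrt (E / 2 / Real.pi) *
    (Real.sqrt (m.factorial * n.factorial) : ℂ)⁻¹ * resonancePhase s * Hm * Hn) * hexp

theorem gaussian_mul_itoHermite_eq_Fmn {E : ℝ} (hE : 0 < E) (hs : s = 1 ∨ s = -1) (m n : ℕ)
    (t x : ℝ) :
    (1 / (2 * Real.pi) : ℝ) * (Real.sqrt (E / 2 / Real.pi) *
        (Real.sqrt (m.factorial * n.factorial) : ℂ)⁻¹ * resonancePhase s *
          cexp (-s * I * E * t ^ 2 / 2)) *
        (Real.sqrt (2 * Real.pi) / resonanceSlope E s *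
          cexp ((I * x / resonanceSlope E s) ^ 2 / 2) *
          itoHermite m n (resonancePhase s * Real.sqrt E * t - I * x / resonanceSlope E s)
            (resonancePhase s * Real.sqrt E * t + I * x / resonanceSlope E s)) =
      Fmn E s m n t x := by
  have hs2 : (s : ℂ) ^ 2 = 1 := by rcases hs with rfl | rfl <;> simp
  have hexp : cexp (-s * I * E * t ^ 2 / 2) *
      cexp ((resonancePhase s * Real.sqrt E * (s * x)) ^ 2 / 2) =
      cexp (-s * I * E * (t ^ 2 - x ^ 2) / 2) := by
    rw [← Complex.exp_add, mul_pow, mul_pow, mul_pow, resonancePhase_sq hs, sq_ofReal_sqrt hE.le,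
      hs2]
    congr 1
    ring
  have hconst : ((E / (2 * Real.pi) : ℝ) : ℂ) = (1 / (2 * Real.pi) : ℝ) *
      (Real.sqrt (E / 2 / Real.pi) *
        (resonancePhase s * (Real.sqrt (2 * Real.pi) / resonanceSlope E s))) := by
    rw [sqrt_mul_resonancePhase_mul_sqrt_div_resonanceSlope hE, ← ofReal_mul, one_div_mul_eq_div]
  rw [Fmn_eq_itoHermite hE.le hs, I_mul_div_resonanceSlope hE hs, ← mul_sub, ← mul_add, ← hexp,
    hconst]
  ring

end ResonanceEigenfunctions

theorem wigner_of_resonance_eigenfunctions_general (E : ℝ) (hE : 0 < E) (m n : ℕ)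
    (s : ℝ) (hs : s = 1 ∨ s = -1) (t x : ℝ) :
    Tendsto
      (fun ε : ℝ => ((1 / (2 * Real.pi) : ℝ) : ℂ) *
        ∫ k : ℝ,
          ((Real.exp (-(ε * k ^ 2)) : ℝ) : ℂ) * cexp (I * (k : ℂ) * (x : ℂ)) *
            fres (E / 2) s m (t - k / E) * fres (E / 2) s n (t + k / E))
      (nhdsWithin (0 : ℝ) (Set.Ioi 0)) (nhds (Fmn E s m n t x)) := by
  have hre : (resonanceSlope E s ^ 2).re = 0 := by simp [resonanceSlope_sq hE.le hs]
  have hlim := (tendsto_integral_hermite_mul_hermite (resonanceSlope_re_pos hE hs) hre.ge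
    (resonancePhase s * Real.sqrt E * t) (resonancePhase s * Real.sqrt E * t) (I * x) m n).comp
    (tendsto_ofReal_add_nhdsWithin_re_pos (by simp [hre]))
  rw [← gaussian_mul_itoHermite_eq_Fmn hE hs]
  refine (hlim.const_mul _).congr fun ε => ?_
  simp only [exp_mul_fres_mul_fres hE hs, integral_const_mul, Function.comp_apply]
  rw [mul_assoc]

/-- the regularized Wigner-transform integral of
`|f_m^±⟩⟨f_n^∓|` (at `θ = 2/E`, `E′ = E/2`) converges and equals the explicit
Laguerre-type expression `F^±_{m,n}`. -/
theorem wigner_of_resonance_eigenfunctions (E : ℝ) (hE : 0 < E) (m n : ℕ)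
    (hmn : n ≤ m) (s : ℝ) (hs : s = 1 ∨ s = -1) (t x : ℝ) :
    Filter.Tendsto
      (fun ε : ℝ => ((1 / (2 * Real.pi) : ℝ) : ℂ) *
        ∫ k : ℝ,
          ((Real.exp (-(ε * k ^ 2)) : ℝ) : ℂ) * Complex.exp (Complex.I * (k : ℂ) * (x : ℂ)) *
            fres (E / 2) s m (t - k / E) * fres (E / 2) s n (t + k / E))
      (nhdsWithin (0 : ℝ) (Set.Ioi 0)) (nhds (Fmn E s m n t x)) := by
  exact wigner_of_resonance_eigenfunctions_general E hE m n s hs t x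
end
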